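/- Let k > 0, \lambda > 0, \gamma > 0 and x > 0 be fixed. Then the function \nu \mapsto \mathcal{I}_{k,\nu}^{\gamma,\lambda}(x) := \Gamma_k(\nu+1)\,\mathtt{I}_{k,\nu}^{\gamma,\lambda}(x) is log-convex on (0, \infty), i.e., \nu \mapsto \log\big(\Gamma_k(\nu+1)\,\mathtt{I}_{k,\nu}^{\gamma,\lambda}(x)\big) is convex on (0,\infty). -/

import Mathlib

/-- The k-gamma function `Γ_k(x) = k^(x/k - 1) Γ(x/k)`. -/
noncomputable def kGamma (k x : ℝ) : ℝ := k ^ (x / k - 1) * Real.Gamma (x / k)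

/-- The k-Pochhammer symbol `(x)_{n,k} = ∏_{j=0}^{n-1} (x + j k)`. -/
noncomputable def kPoch (x k : ℝ) (n : ℕ) : ℝ := ∏ j ∈ Finset.range n, (x + (j : ℝ) * k)

/-- The modified k-Bessel function of the first kind. -/
noncomputable def kBesselI (k ν γ lam x : ℝ) : ℝ :=
  ∑' n : ℕ, kPoch γ k n / (kGamma k (lam * n + ν + 1) * ((n.factorial : ℝ)) ^ 2) * (x / 2) ^ n

/-- The k-confluent hypergeometric function `Φ_k(a; c; x)`. -/
noncomputable def kPhi (k a c x : ℝ) : ℝ :=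
  ∑' n : ℕ, kPoch a k n / (kPoch c k n * (n.factorial : ℝ)) * x ^ n

/-- The k-digamma function `Ψ_k`. -/
noncomputable def kPsi (k t : ℝ) : ℝ :=
  (Real.log k - Real.eulerMascheroniConstant) / k - 1 / t +
    ∑' n : ℕ, t / (((n : ℝ) + 1) * k * (((n : ℝ) + 1) * k + t))

/-- `log (x + h) - log x` is convex on the positive half-line. -/
lemma log_shift_convex (h : ℝ) (hh : 0 ≤ h) {x y a b : ℝ} (hx : 0 < x) (hy : 0 < y)
    (ha : 0 < a) (hb : 0 < b) (hab : a + b = 1) :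
    Real.log (a * x + b * y + h) - Real.log (a * x + b * y) ≤
      a * (Real.log (x + h) - Real.log x) + b * (Real.log (y + h) - Real.log y) := by
  have hz : 0 < a * x + b * y := by positivity
  have h1 : 0 < x / (x + h) := by positivity
  have h2 : 0 < y / (y + h) := by positivity
  have hc := strictConcaveOn_log_Ioi.concaveOn.2 (Set.mem_Ioi.2 h1) (Set.mem_Ioi.2 h2)
    ha.le hb.le hab
  simp only [smul_eq_mul] at hc
  have hle : a * (x / (x + h)) + b * (y / (y + h)) ≤ (a * x + b * y) / (a * x + b * y + h) := by
    have e1 : x / (x + h) = 1 - h / (x + h) := by field_simp; ring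
    have e2 : y / (y + h) = 1 - h / (y + h) := by field_simp; ring
    have e3 : (a * x + b * y) / (a * x + b * y + h) = 1 - h * (a * x + b * y + h)⁻¹ := by
      field_simp; ring
    have hcv := (convexOn_zpow (𝕜 := ℝ) (-1)).2 (Set.mem_Ioi.2 (show 0 < x + h by positivity))
      (Set.mem_Ioi.2 (show 0 < y + h by positivity)) ha.le hb.le hab
    simp only [smul_eq_mul, zpow_neg_one] at hcv
    have e4 : a * (x + h) + b * (y + h) = a * x + b * y + h := by
      linear_combination h * hab
    rw [e4] at hcv
    rw [e1, e2, e3, div_eq_mul_inv, div_eq_mul_inv]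
    have := mul_le_mul_of_nonneg_left hcv hh
    nlinarith
  have hl := Real.log_le_log (by positivity) hle
  rw [Real.log_div hz.ne' (by positivity)] at hl
  rw [Real.log_div hx.ne' (by positivity), Real.log_div hy.ne' (by positivity)] at hc
  linarith

/-- `log Γ(x) - log Γ(x + h)` is convex on the positive half-line. -/
lemma log_gamma_ratio_convex (h : ℝ) (hh : 0 ≤ h) {x y a b : ℝ} (hx : 0 < x) (hy : 0 < y)
    (ha : 0 < a) (hb : 0 < b) (hab : a + b = 1) :
    Real.log (Real.Gamma (a * x + b * y)) - Real.log (Real.Gamma (a * x + b * y + h)) ≤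
      a * (Real.log (Real.Gamma x) - Real.log (Real.Gamma (x + h))) +
      b * (Real.log (Real.Gamma y) - Real.log (Real.Gamma (y + h))) := by
  have key : ∀ z : ℝ, 0 < z → Filter.Tendsto
      (fun n => Real.BohrMollerup.logGammaSeq z n - Real.BohrMollerup.logGammaSeq (z + h) n)
      Filter.atTop (nhds (Real.log (Real.Gamma z) - Real.log (Real.Gamma (z + h)))) := fun z hz =>
    (Real.BohrMollerup.tendsto_log_gamma hz).sub
      (Real.BohrMollerup.tendsto_log_gamma (by positivity))
  refine le_of_tendsto_of_tendsto' (key (a * x + b * y) (by positivity))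
    (((key x hx).const_mul a).add ((key y hy).const_mul b)) (fun n => ?_)
  have e : ∀ z : ℝ, Real.BohrMollerup.logGammaSeq z n - Real.BohrMollerup.logGammaSeq (z + h) n
      = -h * Real.log n + ∑ m ∈ Finset.range (n + 1),
        (Real.log (z + m + h) - Real.log (z + m)) := by
    intro z
    unfold Real.BohrMollerup.logGammaSeq
    rw [Finset.sum_sub_distrib]
    simp only [add_right_comm z h]
    ring
  simp only [e]
  have hs : ∑ m ∈ Finset.range (n + 1),
        (Real.log (a * x + b * y + m + h) - Real.log (a * x + b * y + m)) ≤
      ∑ m ∈ Finset.range (n + 1), (a * (Real.log (x + m + h) - Real.log (x + m)) +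
        b * (Real.log (y + m + h) - Real.log (y + m))) := by
    refine Finset.sum_le_sum fun m _ => ?_
    have := log_shift_convex h hh (x := x + m) (y := y + m) (by positivity) (by positivity)
      ha hb hab
    have e4 : a * (x + m) + b * (y + m) = a * x + b * y + m := by
      linear_combination (m : ℝ) * hab
    rwa [e4] at this
  rw [Finset.sum_add_distrib, ← Finset.mul_sum, ← Finset.mul_sum] at hs
  have : -h * Real.log n = a * (-h * Real.log n) + b * (-h * Real.log n) := by
    linear_combination (h * Real.log n) * hab
  linarith

/-- Hoelder's inequality for series, in logarithmic form. -/
lemma log_tsum_le {f g u : ℕ → ℝ} (hf : ∀ n, 0 < f n) (hg : ∀ n, 0 < g n) (hu : ∀ n, 0 < u n)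
    (sf : Summable f) (sg : Summable g) (su : Summable u) {a b : ℝ}
    (ha : 0 < a) (hb : 0 < b) (hab : a + b = 1)
    (h : ∀ n, Real.log (u n) ≤ a * Real.log (f n) + b * Real.log (g n)) :
    Real.log (∑' n, u n) ≤ a * Real.log (∑' n, f n) + b * Real.log (∑' n, g n) := by
  have hF : 0 < ∑' n, f n := sf.tsum_pos (fun n => (hf n).le) 0 (hf 0)
  have hG : 0 < ∑' n, g n := sg.tsum_pos (fun n => (hg n).le) 0 (hg 0)
  have hU : 0 < ∑' n, u n := su.tsum_pos (fun n => (hu n).le) 0 (hu 0)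
  set F := ∑' n, f n with hFd
  set G := ∑' n, g n with hGd
  set E := Real.exp (a * Real.log F + b * Real.log G) with hE
  have hs := ((sf.hasSum.mul_left (a / F)).add (sg.hasSum.mul_left (b / G))).mul_left E
  rw [← hFd, ← hGd] at hs
  have hle : ∀ n, u n ≤ E * (a / F * f n + b / G * g n) := by
    intro n
    have hc := strictConcaveOn_log_Ioi.concaveOn.2
      (Set.mem_Ioi.2 (show 0 < f n / F from div_pos (hf n) hF))
      (Set.mem_Ioi.2 (show 0 < g n / G from div_pos (hg n) hG)) ha.le hb.le hab
    simp only [smul_eq_mul] at hc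
    rw [Real.log_div (hf n).ne' hF.ne', Real.log_div (hg n).ne' hG.ne'] at hc
    have e : a * (f n / F) + b * (g n / G) = a / F * f n + b / G * g n := by ring
    rw [e] at hc
    have hp : 0 < a / F * f n + b / G * g n := by
      have := hf n; have := hg n; positivity
    rw [← Real.log_le_log_iff (hu n) (by positivity), Real.log_mul (by positivity) hp.ne', hE,
      Real.log_exp]
    linarith [h n]
  have := hasSum_le hle su.hasSum hs
  have e : E * (a / F * F + b / G * G) = E := by
    rw [div_mul_cancel₀ _ hF.ne', div_mul_cancel₀ _ hG.ne', hab, mul_one]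
  rw [e] at this
  rwa [Real.log_le_iff_le_exp hU]

lemma kGamma_pos' {k y : ℝ} (hk : 0 < k) (hy : 0 < y) : 0 < kGamma k y :=
  mul_pos (Real.rpow_pos_of_pos hk _) (Real.Gamma_pos_of_pos (by positivity))

lemma kPoch_pos' {k c : ℝ} (hk : 0 < k) (hc : 0 < c) (n : ℕ) : 0 < kPoch c k n :=
  Finset.prod_pos fun j _ => by positivity

lemma kPoch_le' {k c : ℝ} (hk : 0 < k) (hc : 0 < c) (n : ℕ) :
    kPoch c k n ≤ (c + k) ^ n * n.factorial := by
  induction n with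
  | zero => simp [kPoch]
  | succ n ih =>
    have e : kPoch c k (n + 1) = kPoch c k n * (c + n * k) := by
      unfold kPoch; rw [Finset.prod_range_succ]
    rw [e, pow_succ, Nat.factorial_succ]
    push_cast
    have h2 : c + n * k ≤ (c + k) * (n + 1) := by
      have : (0 : ℝ) ≤ c * n := by positivity
      nlinarith
    calc kPoch c k n * (c + n * k) ≤ ((c + k) ^ n * n.factorial) * ((c + k) * (n + 1)) := by
          gcongr
      _ = _ := by ring

lemma gamma_lower : ∃ m : ℝ, 0 < m ∧ ∀ y : ℝ, 0 < y → m ≤ Real.Gamma y := by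
  obtain ⟨z, hz, hmin⟩ := Real.exists_isMinOn_Gamma_Ioi
  exact ⟨Real.Gamma z, Real.Gamma_pos_of_pos (by linarith [hz.1]), fun y hy => hmin hy⟩

lemma bessel_term_pos {k lam γ x ν : ℝ} (hk : 0 < k) (hlam : 0 < lam) (hγ : 0 < γ) (hx : 0 < x)
    (hν : 0 < ν) (n : ℕ) :
    0 < kPoch γ k n / (kGamma k (lam * n + ν + 1) * ((n.factorial : ℝ)) ^ 2) * (x / 2) ^ n := by
  have h1 := kPoch_pos' hk hγ n
  have h2 : 0 < kGamma k (lam * n + ν + 1) := kGamma_pos' hk (by positivity)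
  positivity

lemma bessel_summable {k lam γ x ν : ℝ} (hk : 0 < k) (hlam : 0 < lam) (hγ : 0 < γ) (hx : 0 < x)
    (hν : 0 < ν) :
    Summable fun n : ℕ =>
      kPoch γ k n / (kGamma k (lam * n + ν + 1) * ((n.factorial : ℝ)) ^ 2) * (x / 2) ^ n := by
  obtain ⟨m, hm, hmin⟩ := gamma_lower
  set A := k ^ ((ν + 1) / k - 1) with hA
  set B := k ^ (lam / k) with hB
  have hAp : 0 < A := Real.rpow_pos_of_pos hk _
  have hBp : 0 < B := Real.rpow_pos_of_pos hk _
  have hs := (Real.summable_pow_div_factorial ((γ + k) * (x / 2) / B)).mul_left (1 / (A * m))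
  refine Summable.of_nonneg_of_le (fun n => (bessel_term_pos hk hlam hγ hx hν n).le)
    (fun n => ?_) hs
  have hG : A * B ^ n * m ≤ kGamma k (lam * n + ν + 1) := by
    unfold kGamma
    have e : k ^ ((lam * n + ν + 1) / k - 1) = A * B ^ n := by
      rw [hA, hB, ← Real.rpow_natCast, ← Real.rpow_mul hk.le, ← Real.rpow_add hk]
      congr 1; ring
    rw [e]
    exact mul_le_mul_of_nonneg_left (hmin _ (by positivity)) (by positivity)
  have hf : (0 : ℝ) < n.factorial := by positivity
  calc _ ≤ ((γ + k) ^ n * n.factorial) / ((A * B ^ n * m) * ((n.factorial : ℝ)) ^ 2)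
        * (x / 2) ^ n := by
        gcongr
        exact kPoch_le' hk hγ n
    _ = _ := by
        rw [div_pow ((γ + k) * (x / 2)), mul_pow]
        field_simp

lemma log_kGamma {k y : ℝ} (hk : 0 < k) (hy : 0 < y) :
    Real.log (kGamma k y) = (y / k - 1) * Real.log k + Real.log (Real.Gamma (y / k)) := by
  unfold kGamma
  rw [Real.log_mul (Real.rpow_pos_of_pos hk _).ne'
    (Real.Gamma_pos_of_pos (by positivity)).ne', Real.log_rpow hk]

/-- log-convexity in the order ν of `Γ_k(ν+1) I_{k,ν}^{γ,λ}(x)`. -/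
theorem kBesselI_logConvex_in_order
    (k lam γ x : ℝ) (hk : 0 < k) (hlam : 0 < lam) (hγ : 0 < γ) (hx : 0 < x) :
    ConvexOn ℝ (Set.Ioi 0)
      (fun ν => Real.log (kGamma k (ν + 1) * kBesselI k ν γ lam x)) := by
  rw [convexOn_iff_forall_pos]
  refine ⟨convex_Ioi 0, ?_⟩
  intro p hp q hq a b ha hb hab
  have hp : 0 < p := hp
  have hq : 0 < q := hq
  simp only [smul_eq_mul]
  have hr : 0 < a * p + b * q := by positivity
  unfold kBesselI
  rw [← tsum_mul_left, ← tsum_mul_left, ← tsum_mul_left]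
  have pos : ∀ ν : ℝ, 0 < ν → ∀ n : ℕ, 0 < kGamma k (ν + 1) *
      (kPoch γ k n / (kGamma k (lam * n + ν + 1) * ((n.factorial : ℝ)) ^ 2) * (x / 2) ^ n) :=
    fun ν hν n => mul_pos (kGamma_pos' hk (by positivity)) (bessel_term_pos hk hlam hγ hx hν n)
  refine log_tsum_le (pos p hp) (pos q hq) (pos _ hr)
    ((bessel_summable hk hlam hγ hx hp).mul_left _)
    ((bessel_summable hk hlam hγ hx hq).mul_left _)
    ((bessel_summable hk hlam hγ hx hr).mul_left _) ha hb hab (fun n => ?_)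
  set C := Real.log (kPoch γ k n) - Real.log (((n.factorial : ℝ)) ^ 2)
    + Real.log ((x / 2) ^ n) - (lam * n / k) * Real.log k with hC
  have e : ∀ ν : ℝ, 0 < ν → Real.log (kGamma k (ν + 1) *
      (kPoch γ k n / (kGamma k (lam * n + ν + 1) * ((n.factorial : ℝ)) ^ 2) * (x / 2) ^ n))
      = C + (Real.log (Real.Gamma ((ν + 1) / k))
        - Real.log (Real.Gamma ((ν + 1) / k + lam * n / k))) := by
    intro ν hν
    have h1 := kPoch_pos' hk hγ n
    have hy : 0 < lam * n + ν + 1 := by positivity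
    have h2 : 0 < kGamma k (lam * n + ν + 1) := kGamma_pos' hk hy
    have h3 : 0 < kGamma k (ν + 1) := kGamma_pos' hk (by positivity)
    rw [Real.log_mul h3.ne' (by positivity), Real.log_mul (by positivity) (by positivity),
      Real.log_div h1.ne' (by positivity), Real.log_mul h2.ne' (by positivity),
      log_kGamma hk hy, log_kGamma hk (by positivity), hC]
    have e5 : (lam * n + ν + 1) / k = (ν + 1) / k + lam * n / k := by ring
    rw [e5]
    ring
  rw [e p hp, e q hq, e _ hr]
  have := log_gamma_ratio_convex (lam * n / k) (by positivity) (x := (p + 1) / k)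
    (y := (q + 1) / k) (by positivity) (by positivity) ha hb hab
  have e6 : a * ((p + 1) / k) + b * ((q + 1) / k) = (a * p + b * q + 1) / k := by
    linear_combination (1 / k) * hab
  rw [e6] at this
  have e7 : C = a * C + b * C := by rw [← add_mul, hab, one_mul]
  linarith
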